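/- Let q be an odd prime power, E ⊆ F_q², and a ∈ F_q with a ≠ 0. For x ∈ F_q², let S_a(x) = {y ∈ F_q² : ‖x − y‖ = a} and let S_a = S_a(0). Then ∑_{x ∈ F_q²} ( |E ∩ S_a(x)| − |E| |S_a| q^{−2} )² ≤ 4 q |E|. -/

import Mathlib

/-!
Fourier analysis on `F²` reduces the second moment to a bound on one exponential sum. The function
`x ↦ |E ∩ S_a(x)|` is the convolution of the indicator functions of `E` and `S_a`, and subtracting
its mean removes exactly the frequency `0`. By Plancherel the claim follows from
`|Ŝ_a(ξ)| ≤ 2 √q` for `ξ ≠ 0` (`circle_fourier`). Detecting the circle with additive characters and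
completing the square turns `Ŝ_a(ξ)` into a unit multiple of the Kloosterman sum
`K(-a, -‖ξ‖ / 4)`, so what is needed is Weil's bound `|K(a, b)| ≤ 2 √q` (`norm_kloosterman_le`).

Weil's bound is proved by amplification along quadratic extensions. If `M / L` is quadratic, then
`K_M = 2 |L| - K_L²` (`kloosterman_quadratic`): elements of `M` and pairs of elements of `L` are
both described by their trace `s` and norm `t`, and each `(s, t)` is hit twice in total. If
`|K_F| = (2 + δ) √q` with `δ > 0`, then along a tower of such extensions the normalised sum
`|K_L| / √|L|` is at least `2 + 4 ^ j δ` (`kloosterman_tower`), hence is unbounded.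

On the other hand `|K_L| ≤ (3 q + 1) √|L|` whenever `[L : F] = 2 m ≥ 4`
(`norm_kloosterman_trLift_le`). Stepanov's method (`stepanov_core`) shows that each fibre of
`x ↦ Tr(a x + b / x)` has at most `|L| / q + 3 √|L|` points. Because `∑ ψ = 0` and the fibre sizes
add up to `|L| - 1`, this one-sided bound on the fibres already bounds the character sum.
-/

/-! ### Stepanov's method and fibres of the trace -/

open Polynomial in
lemma exists_dep {L ι : Type*} [Field L] [Fintype ι] (P : ι → L[X]) (N : ℕ)
    (hP : ∀ i, (P i).natDegree < N) (hN : N < Fintype.card ι) :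
    ∃ d : ι → L, d ≠ 0 ∧ ∑ i, C (d i) * P i = 0 := by
  let f : (ι → L) →ₗ[L] (Fin N → L) :=
    { toFun := fun d t => ∑ i, d i * (P i).coeff t
      map_add' := by intro x y; ext t; simp [add_mul, Finset.sum_add_distrib]
      map_smul' := by intro c x; ext t; simp [Finset.mul_sum, mul_assoc] }
  have hf : LinearMap.ker f ≠ ⊥ := LinearMap.ker_ne_bot_of_finrank_lt (by simpa using hN)
  obtain ⟨d, hd, hd0⟩ := (Submodule.ne_bot_iff _).1 hf
  refine ⟨d, hd0, ?_⟩
  ext t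
  simp only [finsetSum_coeff, coeff_C_mul, coeff_zero]
  by_cases ht : t < N
  · exact congrFun (LinearMap.mem_ker.1 hd) ⟨t, ht⟩
  · exact Finset.sum_eq_zero fun i _ => by
      rw [coeff_eq_zero_of_natDegree_lt (by have := hP i; omega), mul_zero]

open Polynomial in
lemma sum_ne_zero_of_natDegree_injective {L ι : Type*} [Field L] [Fintype ι] (Q : ι → L[X])
    (hQ : ∀ i, Q i ≠ 0) (hinj : Function.Injective fun i => (Q i).natDegree)
    (d : ι → L) (hd : d ≠ 0) : ∑ i, C (d i) * Q i ≠ 0 := by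
  intro h
  have key := degree_sum_eq_of_disjoint (fun i => C (d i) * Q i) Finset.univ (by
    rintro i ⟨-, hi⟩ j ⟨-, hj⟩ hij
    have hi' : d i ≠ 0 := by rintro h0; simp [h0] at hi
    have hj' : d j ≠ 0 := by rintro h0; simp [h0] at hj
    simp only [Function.onFun, Function.comp, degree_C_mul hi', degree_C_mul hj']
    intro heq
    exact hij (hinj (natDegree_eq_of_degree_eq heq)))
  obtain ⟨i, hi⟩ := Function.ne_iff.1 hd
  rw [h, degree_zero] at key
  have := (Finset.sup_eq_bot_iff _ _).1 key.symm i (Finset.mem_univ i)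
  rw [degree_eq_bot] at this
  simp at hi
  simp [hi, hQ i] at this

open Polynomial in
/-- Stepanov's method. Write `φ = q e`, so that `|L| = φ²` and `σ` is the `φ`-power map, and let
`y = U(x) / x ^ e`. On the set where `y ^ φ = c - y`, the `φ`-th power of
`∑ s x ^ (k + φ i) y ^ j` (over `k < e`, `j < q`, `i < e + 2`) equals
`∑ s ^ φ x ^ (k φ + i) (c - y) ^ j`. After clearing denominators the latter is a polynomial of
small degree in `x`, so that the coefficients can be chosen to make it vanish identically, whereas
the former is a nonzero polynomial because its terms have distinct degrees. The set then
lies among the roots of that nonzero polynomial. -/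
lemma stepanov_core {L : Type*} [Field L] [Fintype L] (q e : ℕ) (hq : 3 ≤ q) (he : 2 ≤ e)
    (σ : L →+* L) (hσ : ∀ x, σ x = x ^ (q * e)) (hcard : Fintype.card L = (q * e) ^ 2)
    (U : L[X]) (hU : U.natDegree = 2 * e) (c : L) (Z : Finset L)
    (hZ : ∀ x ∈ Z, x ≠ 0 ∧ (U.eval x / x ^ e) ^ (q * e) = c - U.eval x / x ^ e) :
    Z.card ≤ e * (q * e) + 3 * (q * e) := by
  have hU0 : U ≠ 0 := by rintro rfl; simp at hU; omega
  let ι := Fin e × Fin q × Fin (e + 2)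
  let P : ι → L[X] := fun i => X ^ (i.1.1 * (q * e) + i.2.2.1) *
    (C c * X ^ e - U) ^ i.2.1.1 * X ^ (e * (q - 1 - i.2.1.1))
  let Q : ι → L[X] := fun i => X ^ (i.1.1 + (q * e) * i.2.2.1) *
    U ^ i.2.1.1 * X ^ (e * (q - 1 - i.2.1.1))
  have hQ0 : ∀ i, Q i ≠ 0 := fun i => by simp [Q, hU0]
  have hQd : ∀ i, (Q i).natDegree = i.1.1 + e * (i.2.1.1 + q * i.2.2.1) + e * (q - 1) := by
    rintro ⟨a, j, i⟩
    have hj := j.2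
    simp only [Q]
    rw [natDegree_mul (by simp [hU0]) (by simp), natDegree_mul (by simp) (by simp [hU0]),
      natDegree_X_pow, natDegree_X_pow, natDegree_pow, hU]
    obtain ⟨t, ht⟩ : ∃ t, q - 1 = j.1 + t := ⟨q - 1 - j.1, by omega⟩
    rw [ht, Nat.add_sub_cancel_left]; ring
  have hPd : ∀ i, (P i).natDegree < e * (q * e) + q * e + (e + 2) := by
    rintro ⟨a, j, i⟩
    have h1 : (C c * X ^ e - U).natDegree ≤ 2 * e := by
      refine (natDegree_sub_le _ _).trans (max_le ?_ hU.le)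
      exact (natDegree_C_mul_X_pow_le _ _).trans (by omega)
    have h2 : (P (a, j, i)).natDegree ≤
        (a.1 * (q * e) + i.1) + j.1 * (2 * e) + e * (q - 1 - j.1) := by
      refine natDegree_mul_le_of_le (natDegree_mul_le_of_le ?_ ?_) ?_
      · simp
      · exact natDegree_pow_le_of_le _ h1
      · simp
    have hj := j.2
    have hi := i.2
    have ha := a.2
    refine h2.trans_lt ?_
    obtain ⟨t, ht⟩ : ∃ t, q = j.1 + t + 1 := ⟨q - 1 - j.1, by omega⟩
    have e1 : q - 1 - j.1 = t := by omega
    rw [e1]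
    have e2 : a.1 * (q * e) + q * e ≤ e * (q * e) := by
      have := Nat.mul_le_mul_right (q * e) (show a.1 + 1 ≤ e from ha); linarith
    have e3 : j.1 * (2 * e) + e * t ≤ 2 * (q * e) := by
      have e4 : q * e = (j.1 + t + 1) * e := congrArg (· * e) ht
      rw [e4]; nlinarith
    omega
  -- `q e (e + 2)` polynomials in a space of smaller dimension; this is where `3 ≤ q` enters
  obtain ⟨d, hd0, hd⟩ := exists_dep P _ hPd (by
    simp only [ι, Fintype.card_prod, Fintype.card_fin]
    nlinarith [Nat.mul_le_mul_right e hq])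
  -- `d ^ (q e)` is the `q e`-th root of `d`, because `(q e) ^ 2 = |L|`.
  let s : ι → L := fun i => d i ^ (q * e)
  have hs : ∀ i, (s i) ^ (q * e) = d i := fun i => by
    simp only [s]; rw [← pow_mul, ← sq, ← hcard, FiniteField.pow_card]
  have hs0 : s ≠ 0 := by
    intro h; apply hd0; ext i
    rw [← hs i, h]; simp; omega
  -- `(k, j, i)` are the digits of the degree in mixed radix `e`, `q`
  have hinj : Function.Injective fun i => (Q i).natDegree := by
    rintro ⟨a, j, i⟩ ⟨a', j', i'⟩ h
    replace h : a.1 + e * (j.1 + q * i.1) = a'.1 + e * (j'.1 + q * i'.1) :=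
      Nat.add_right_cancel ((hQd (a, j, i)).symm.trans (h.trans (hQd (a', j', i'))))
    have ha := a.2
    have ha' := a'.2
    have hj := j.2
    have hj' := j'.2
    have h1 : a.1 = a'.1 := by
      have := congrArg (· % e) h
      simpa [Nat.add_mul_mod_self_left, Nat.mod_eq_of_lt ha, Nat.mod_eq_of_lt ha'] using this
    rw [h1] at h
    have h2 : j.1 + q * i.1 = j'.1 + q * i'.1 :=
      Nat.eq_of_mul_eq_mul_left (by omega) (Nat.add_left_cancel h)
    have h3 : j.1 = j'.1 := by
      have := congrArg (· % q) h2
      simpa [Nat.add_mul_mod_self_left, Nat.mod_eq_of_lt hj, Nat.mod_eq_of_lt hj'] using this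
    rw [h3] at h2
    have h4 : i.1 = i'.1 := Nat.eq_of_mul_eq_mul_left (by omega) (Nat.add_left_cancel h2)
    exact Prod.ext (Fin.ext h1) (Prod.ext (Fin.ext h3) (Fin.ext h4))
  have hG0 := sum_ne_zero_of_natDegree_injective Q hQ0 hinj s hs0
  set G := ∑ i, C (s i) * Q i with hG
  have hGd : G.natDegree ≤ e * (q * e) + 3 * (q * e) := by
    refine natDegree_sum_le_of_forall_le _ _ fun i _ => ?_
    refine (natDegree_C_mul_le _ _).trans ?_
    rw [hQd]
    obtain ⟨a, j, i⟩ := i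
    have hj := j.2
    have hi := i.2
    have ha := a.2
    have e1 : j.1 + q * i.1 + 1 ≤ q + q * (e + 1) := by
      have := Nat.mul_le_mul_left q (show i.1 ≤ e + 1 by omega)
      omega
    have e2 := Nat.mul_le_mul_left e e1
    have e3 := Nat.mul_le_mul_left e (show q - 1 ≤ q by omega)
    change a.1 + e * (j.1 + q * i.1) + e * (q - 1) ≤ _
    nlinarith
  have hroot : ∀ x ∈ Z, G.eval x = 0 := by
    intro x hx
    obtain ⟨hx0, hxy⟩ := hZ x hx
    set y := U.eval x / x ^ e with hy
    have hUy : U.eval x = y * x ^ e := by rw [hy]; field_simp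
    have hQx : ∀ i, (Q i).eval x = x ^ (i.1.1 + (q * e) * i.2.2.1) * y ^ i.2.1.1 *
        x ^ (e * (q - 1)) := by
      rintro ⟨a, j, i⟩
      have hj := j.2
      simp only [Q, eval_mul, eval_pow, eval_X, hUy]
      obtain ⟨t, ht⟩ : ∃ t, q - 1 = j.1 + t := ⟨q - 1 - j.1, by omega⟩
      rw [ht, Nat.add_sub_cancel_left]; ring
    have hPx : ∀ i, (P i).eval x = x ^ (i.1.1 * (q * e) + i.2.2.1) * (c - y) ^ i.2.1.1 *
        x ^ (e * (q - 1)) := by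
      rintro ⟨a, j, i⟩
      have hj := j.2
      simp only [P, eval_mul, eval_pow, eval_X, hUy, eval_sub, eval_C]
      obtain ⟨t, ht⟩ : ∃ t, q - 1 = j.1 + t := ⟨q - 1 - j.1, by omega⟩
      rw [ht, Nat.add_sub_cancel_left, ← sub_mul, mul_pow]; ring
    have h1 : (∑ i, d i * (x ^ (i.1.1 * (q * e) + i.2.2.1) * (c - y) ^ i.2.1.1)) *
        x ^ (e * (q - 1)) = 0 := by
      have := congrArg (eval x) hd
      simp only [eval_finsetSum, eval_mul, eval_C, hPx, eval_zero] at this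
      rw [← this, Finset.sum_mul]
      exact Finset.sum_congr rfl fun i _ => by ring
    have h2 := (mul_eq_zero.1 h1).resolve_right (pow_ne_zero _ hx0)
    have h3 : σ (∑ i, s i * (x ^ (i.1.1 + (q * e) * i.2.2.1) * y ^ i.2.1.1)) = 0 := by
      rw [map_sum, ← h2]
      refine Finset.sum_congr rfl fun i _ => ?_
      have hxx : x ^ ((q * e) * (q * e)) = x := by rw [← sq, ← hcard, FiniteField.pow_card]
      rw [hσ, mul_pow, mul_pow, hs, ← pow_mul y, mul_comm i.2.1.1, pow_mul y, hxy, ← pow_mul,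
        add_mul, pow_add, mul_right_comm (q * e), pow_mul x (q * e * (q * e)), hxx, pow_add]
    have h4 := (map_eq_zero σ).1 h3
    rw [hG, eval_finsetSum]
    simp only [eval_mul, eval_C, hQx]
    rw [← zero_mul (x ^ (e * (q - 1))), ← h4, Finset.sum_mul]
    exact Finset.sum_congr rfl fun i _ => by ring
  calc Z.card ≤ G.natDegree := card_le_degree_of_subset_roots (by
        intro x hx
        exact (mem_roots hG0).2 (hroot x hx))
    _ ≤ _ := hGd

open Polynomial in
/-- Since `Tr(z) = ∑_{i < 2 m} z ^ q ^ i`, the equation `Tr(a x + b / x) = c` reads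
`y + y ^ q ^ m = c` with `y = ∑_{i < m} (a x + b / x) ^ q ^ i`, which is the shape treated by
`stepanov_core`. -/
lemma card_trace_fiber_le (F L : Type*) [Field F] [Fintype F] [Field L] [Fintype L] [Algebra F L]
    (hq : 3 ≤ Fintype.card F) (m : ℕ) (hm : 2 ≤ m) (hL : Module.finrank F L = 2 * m)
    (a b c : F) (ha : a ≠ 0) (Z : Finset L)
    (hZ : ∀ x ∈ Z, x ≠ 0 ∧
      Algebra.trace F L (algebraMap F L a * x + algebraMap F L b * x⁻¹) = c) :
    Z.card ≤ Fintype.card F ^ (2 * m - 1) + 3 * Fintype.card F ^ m := by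
  set q := Fintype.card F with hqdef
  set e := q ^ (m - 1) with he
  have hqe : q * e = q ^ m := by rw [he, ← pow_succ']; congr 1; omega
  have hfrob : ∀ (i : ℕ) (x : L), (FiniteField.frobeniusAlgHom F L ^ i) x = x ^ q ^ i := by
    intro i x
    simp [AlgHom.coe_pow, FiniteField.coe_frobeniusAlgHom, hqdef, pow_iterate]
  have hle : ∀ i ∈ Finset.range m, q ^ i ≤ e := fun i hi =>
    Nat.pow_le_pow_right (by omega) (by have := Finset.mem_range.1 hi; omega)
  set a' := algebraMap F L a with ha'
  set b' := algebraMap F L b with hb'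
  have ha0 : a' ≠ 0 := by simpa [ha'] using ha
  have he2 : 2 ≤ e := by
    calc 2 ≤ q := by omega
      _ = q ^ 1 := (pow_one q).symm
      _ ≤ e := Nat.pow_le_pow_right (by omega) (by omega)
  let U : L[X] := ∑ i ∈ Finset.range m, (C a' * X ^ (e + q ^ i) + C b' * X ^ (e - q ^ i))
  have hU : U.natDegree = 2 * e := by
    refine natDegree_eq_of_le_of_coeff_ne_zero ?_ ?_
    · refine natDegree_sum_le_of_forall_le _ _ fun i hi => ?_
      refine natDegree_add_le_of_degree_le ?_ ?_
      · exact (natDegree_C_mul_X_pow_le _ _).trans (by have := hle i hi; omega)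
      · exact (natDegree_C_mul_X_pow_le _ _).trans (by omega)
    · have : U.coeff (2 * e) = a' := by
        simp only [U, finsetSum_coeff, coeff_add, coeff_C_mul, coeff_X_pow]
        rw [Finset.sum_eq_single (m - 1)]
        · rw [if_pos (by omega), if_neg (by omega)]; simp
        · intro i hi hne
          have : q ^ i < q ^ (m - 1) := Nat.pow_lt_pow_right (by omega)
            (by have := Finset.mem_range.1 hi; omega)
          rw [if_neg (by omega), if_neg (by omega)]; simp
        · intro h; exact absurd (Finset.mem_range.2 (by omega)) h
      rwa [this]
  have hcard : Fintype.card L = (q * e) ^ 2 := by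
    rw [Module.card_eq_pow_finrank (K := F) (V := L), hL, hqe, ← pow_mul, mul_comm]
  have key := stepanov_core q e hq he2 (FiniteField.frobeniusAlgHom F L ^ m : L →ₐ[F] L).toRingHom
    (fun x => by rw [hqe]; exact hfrob m x) hcard U hU (algebraMap F L c) Z (by
      intro x hx
      obtain ⟨hx0, hx⟩ := hZ x hx
      refine ⟨hx0, ?_⟩
      have hUx : U.eval x / x ^ e = ∑ i ∈ Finset.range m, (a' * x + b' * x⁻¹) ^ q ^ i := by
        simp only [U, eval_finsetSum, Finset.sum_div]
        refine Finset.sum_congr rfl fun i hi => ?_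
        rw [← hfrob i (a' * x + b' * x⁻¹), map_add, map_mul, map_mul, ha', hb', AlgHom.commutes, AlgHom.commutes,
          hfrob, hfrob, ← ha', ← hb']
        obtain ⟨t, ht⟩ := Nat.exists_eq_add_of_le (hle i hi)
        rw [ht, Nat.add_sub_cancel_left]
        simp only [eval_add, eval_mul, eval_C, eval_pow, eval_X, inv_pow]
        field_simp
        ring
      have htr := FiniteField.algebraMap_trace_eq_sum_pow F L (a' * x + b' * x⁻¹)
      rw [hx, hL, Nat.card_eq_fintype_card, ← hqdef, two_mul, Finset.sum_range_add, ← hUx] at htr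
      rw [htr, add_sub_cancel_left, hqe, ← hfrob, hUx, map_sum]
      refine Finset.sum_congr rfl fun i _ => ?_
      rw [hfrob, ← pow_mul, ← pow_add, add_comm m i])
  refine key.trans (le_of_eq ?_)
  rw [hqe, he, ← pow_add]
  congr 2
  omega

/-! ### Kloosterman sums -/

open Classical in
/-- The Kloosterman sum `∑_{x ≠ 0} ψ(a x + b / x)` over a finite field `L`. -/
noncomputable def kloosterman (L : Type*) [Field L] [Fintype L] (ψ : AddChar L ℂ) (a b : L) : ℂ :=
  ∑ x ∈ Finset.univ.filter (fun x : L => x ≠ 0), ψ (a * x + b * x⁻¹)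

/-- The additive character `ψ ∘ Tr_{L/F}` of `L`. -/
noncomputable def AddChar.trLift {F : Type*} (L : Type*) [Field F] [Field L] [Algebra F L]
    (ψ : AddChar F ℂ) : AddChar L ℂ :=
  ψ.compAddMonoidHom (Algebra.trace F L).toAddMonoidHom

lemma trLift_apply {F L : Type*} [Field F] [Field L] [Algebra F L] (ψ : AddChar F ℂ) (x : L) :
    ψ.trLift L x = ψ (Algebra.trace F L x) := rfl

lemma trLift_ne_one {F L : Type*} [Field F] [Finite F] [Field L] [Finite L] [Algebra F L]
    {ψ : AddChar F ℂ} (hψ : ψ ≠ 1) : ψ.trLift L ≠ 1 := by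
  contrapose! hψ
  ext x
  obtain ⟨y, rfl⟩ := Algebra.trace_surjective F L x
  rw [← trLift_apply, hψ]; simp

/-- A bound of the right order of magnitude `√|L| = q ^ m`, with a constant depending only on `q`. -/
lemma norm_kloosterman_trLift_le (F L : Type*) [Field F] [Fintype F] [Field L] [Fintype L]
    [Algebra F L] (hq : 3 ≤ Fintype.card F) (m : ℕ) (hm : 2 ≤ m)
    (hL : Module.finrank F L = 2 * m) (ψ : AddChar F ℂ) (hψ : ψ ≠ 1) (a b : F) (ha : a ≠ 0) :
    ‖kloosterman L (ψ.trLift L) (algebraMap F L a) (algebraMap F L b)‖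
      ≤ (3 * Fintype.card F + 1) * (Fintype.card F : ℝ) ^ m := by
  classical
  set q := Fintype.card F with hqdef
  let S : Finset L := Finset.univ.filter (fun x : L => x ≠ 0)
  let t : L → F := fun x =>
    Algebra.trace F L (algebraMap F L a * x + algebraMap F L b * x⁻¹)
  let N : F → ℕ := fun c => (S.filter (fun x => t x = c)).card
  have hN : ∀ c, (N c : ℝ) ≤ (q : ℝ) ^ (2 * m - 1) + 3 * (q : ℝ) ^ m := fun c => by
    have := card_trace_fiber_le F L hq m hm hL a b c ha (S.filter (fun x => t x = c))
      (fun x hx => by simpa [S, t] using hx)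
    exact_mod_cast this
  have hK : kloosterman L (ψ.trLift L) (algebraMap F L a) (algebraMap F L b) =
      ∑ c, (N c : ℂ) * ψ c := by
    have h1 : kloosterman L (ψ.trLift L) (algebraMap F L a) (algebraMap F L b) =
      ∑ x ∈ S, ψ (t x) := by
      unfold kloosterman
      refine Finset.sum_congr (by ext; simp [S]) fun x _ => rfl
    rw [h1, ← Finset.sum_fiberwise S t]
    refine Finset.sum_congr rfl fun c _ => ?_
    rw [Finset.sum_congr rfl (g := fun _ => ψ c) (fun x hx => by rw [(Finset.mem_filter.1 hx).2])]
    simp [N]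
  have hsum : ∑ c, (N c : ℝ) = (q : ℝ) ^ (2 * m) - 1 := by
    have h1 : ∑ c, N c = S.card := by
      rw [Finset.card_eq_sum_card_fiberwise (f := t) (t := Finset.univ) (by simp)]
    have h2 : S.card + 1 = q ^ (2 * m) := by
      have : S = Finset.univ.erase 0 := by ext; simp [S]
      rw [this, Finset.card_erase_add_one (Finset.mem_univ _), Finset.card_univ,
        Module.card_eq_pow_finrank (K := F) (V := L), hL]
    have h3 : (∑ c, (N c : ℝ)) + 1 = (q : ℝ) ^ (2 * m) := by
      rw [← Nat.cast_sum, h1]; exact_mod_cast h2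
    linarith
  set B : ℝ := (q : ℝ) ^ (2 * m - 1) + 3 * (q : ℝ) ^ m with hB
  -- Since `∑ ψ = 0`, the constant `B` may be subtracted from every fibre size.
  have hK2 : ∑ c, (N c : ℂ) * ψ c = - ∑ c, ((B - N c : ℝ) : ℂ) * ψ c := by
    have h0 : ∑ c, ψ c = 0 := AddChar.sum_eq_zero_of_ne_one hψ
    push_cast
    simp only [sub_mul, Finset.sum_sub_distrib, ← Finset.mul_sum, h0]
    simp
  rw [hK, hK2, norm_neg]
  calc ‖∑ c, ((B - N c : ℝ) : ℂ) * ψ c‖ ≤ ∑ c, (B - N c) := by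
        refine (norm_sum_le _ _).trans (Finset.sum_le_sum fun c _ => ?_)
        rw [norm_mul, AddChar.norm_apply, mul_one, Complex.norm_real, Real.norm_eq_abs,
          abs_of_nonneg (sub_nonneg.2 (hN c))]
    _ = 3 * q * (q : ℝ) ^ m + 1 := by
        rw [Finset.sum_sub_distrib, hsum, Finset.sum_const, Finset.card_univ, nsmul_eq_mul, hB]
        have : (q : ℝ) * (q : ℝ) ^ (2 * m - 1) = (q : ℝ) ^ (2 * m) := by
          rw [← pow_succ']; congr 1; omega
        rw [← this]; ring
    _ ≤ _ := by
        have : (1 : ℝ) ≤ (q : ℝ) ^ m := one_le_pow₀ (by exact_mod_cast (by omega : 1 ≤ q))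
        linarith

/-! ### Quadratic extensions and Weil's bound -/

lemma trace_quadraticAlgebra {L : Type*} [Field L] (d : L) (z : QuadraticAlgebra L d 0) :
    Algebra.trace L (QuadraticAlgebra L d 0) z = 2 * z.re := by
  have hb : ∀ i, (Finsupp.single i 1 : Fin 2 →₀ L) =
      ![(QuadraticAlgebra.basis d 0 i).re, (QuadraticAlgebra.basis d 0 i).im] := fun i => by
    rw [← QuadraticAlgebra.basis_repr_apply, Module.Basis.repr_self]
  have h00 := congrFun (hb 0) 0
  have h01 := congrFun (hb 0) 1
  have h10 := congrFun (hb 1) 0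
  have h11 := congrFun (hb 1) 1
  simp at h00 h01 h10 h11
  rw [Algebra.trace_eq_matrix_trace (QuadraticAlgebra.basis d 0), Matrix.trace,
    Fin.sum_univ_two, Matrix.diag, Matrix.diag, Algebra.leftMulMatrix_eq_repr_mul,
    Algebra.leftMulMatrix_eq_repr_mul]
  simp [QuadraticAlgebra.basis_repr_apply, two_mul, ← h00, ← h01, ← h10, ← h11]

/-- For a nonsquare `d`, the values `v ^ 2` and `d * v ^ 2` together cover every element of `L`
exactly twice. -/
lemma sum_sq_add_sum_nonsquare_mul_sq {L : Type*} [Field L] [Fintype L] (h2 : ringChar L ≠ 2)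
    {d : L} (hd : ¬ IsSquare d) (h : L → ℂ) :
    ∑ v : L, h (v ^ 2) + ∑ v : L, h (d * v ^ 2) = 2 * ∑ D, h D := by
  classical
  have hd0 : d ≠ 0 := by rintro rfl; exact hd ⟨0, by simp⟩
  have e1 : ∀ f : L → L, ∑ v : L, h (f v) =
      ∑ D, ((Finset.univ.filter (fun v => f v = D)).card : ℂ) * h D := by
    intro f
    rw [← Finset.sum_fiberwise Finset.univ f]
    refine Finset.sum_congr rfl fun D _ => ?_
    rw [Finset.sum_congr rfl (g := fun _ => h D)
      (fun x hx => by rw [(Finset.mem_filter.1 hx).2])]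
    simp
  rw [e1, e1, ← Finset.sum_add_distrib, Finset.mul_sum]
  refine Finset.sum_congr rfl fun D _ => ?_
  have c1 := quadraticChar_card_sqrts h2 D
  have c2 := quadraticChar_card_sqrts h2 (d⁻¹ * D)
  have hdi : quadraticChar L d⁻¹ = -1 := by
    rw [quadraticChar_neg_one_iff_not_isSquare]; simpa using hd
  rw [map_mul, hdi] at c2
  have s1 : {x : L | x ^ 2 = D}.toFinset = Finset.univ.filter (fun v => v ^ 2 = D) := by
    ext; simp
  have s2 : {x : L | x ^ 2 = d⁻¹ * D}.toFinset = Finset.univ.filter (fun v => d * v ^ 2 = D) := by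
    ext x; simp [eq_inv_mul_iff_mul_eq₀ hd0]
  rw [s1] at c1
  rw [s2] at c2
  have : ((Finset.univ.filter (fun v => v ^ 2 = D)).card : ℤ) +
    (Finset.univ.filter (fun v => d * v ^ 2 = D)).card = 2 := by rw [c1, c2]; ring
  have : ((Finset.univ.filter (fun v => v ^ 2 = D)).card : ℂ) +
    (Finset.univ.filter (fun v => d * v ^ 2 = D)).card = 2 := by exact_mod_cast this
  rw [← add_mul, this]

/-- The sum over `s` vanishes unless `a + b / t = 0`. Here `s` and `t` play the roles of trace and
norm: `a x + b / x` summed over a pair of conjugates is `a s + b s / t`. -/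
lemma sum_add_div {L : Type*} [Field L] [Fintype L] [DecidableEq L] (ψ : AddChar L ℂ) (hψ : ψ ≠ 1)
    (a b : L) (ha : a ≠ 0) (hb : b ≠ 0) :
    ∑ s : L, ∑ t : L, (if t = 0 then 0 else ψ (a * s + b * (s / t))) = Fintype.card L := by
  rw [Finset.sum_comm]
  have hp := AddChar.IsPrimitive.of_ne_one hψ
  have h1 : ∀ t : L, ∑ s : L, (if t = 0 then 0 else ψ (a * s + b * (s / t))) =
      if t = - b / a then (Fintype.card L : ℂ) else 0 := by
    intro t
    by_cases ht : t = 0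
    · have : t ≠ - b / a := by
        rw [ht]; exact (div_ne_zero (neg_ne_zero.2 hb) ha).symm
      rw [if_neg this]
      exact Finset.sum_eq_zero fun s _ => if_pos ht
    · simp only [ht, if_false]
      have := AddChar.sum_mulShift (a + b / t) hp
      rw [Finset.sum_congr rfl (g := fun s => ψ (s * (a + b / t)))
        (fun s _ => by congr 1; ring), this]
      have hiff : a + b / t = 0 ↔ t = - b / a := by
        rw [eq_div_iff ha]
        field_simp
        constructor <;> intro h <;> linear_combination h
      simp [hiff]
  simp [h1]

/-- The recursion `K_M = 2 |L| - K_L²` for the quadratic extension `M = L(√d)`. It is the case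
`n = 2` of the Hasse–Davenport type relation for Kloosterman sums. -/
lemma kloosterman_quadratic {L : Type*} [Field L] [Fintype L] (h2 : ringChar L ≠ 2)
    {d : L} (hd : ¬ IsSquare d) [Fact (∀ r : L, r ^ 2 ≠ d + 0 * r)]
    [Fintype (QuadraticAlgebra L d 0)]
    (ψ : AddChar L ℂ) (hψ : ψ ≠ 1) (a b : L) (ha : a ≠ 0) (hb : b ≠ 0) :
    kloosterman (QuadraticAlgebra L d 0) (ψ.trLift _) (algebraMap L _ a) (algebraMap L _ b) =
      2 * Fintype.card L - kloosterman L ψ a b ^ 2 := by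
  classical
  have h20 : (2 : L) ≠ 0 := Ring.two_ne_zero h2
  let g : L → L → ℂ := fun s t => if t = 0 then 0 else ψ (a * s + b * (s / t))
  -- both sums are sums of `g (trace, norm)`, over the field extension and over `L × L`
  have hM : kloosterman (QuadraticAlgebra L d 0) (ψ.trLift _) (algebraMap L _ a)
      (algebraMap L _ b) = ∑ u : L, ∑ v : L, g (2 * u) (u ^ 2 - d * v ^ 2) := by
    rw [← Fintype.sum_prod_type', ← (QuadraticAlgebra.equivProd d (0 : L)).sum_comp]
    unfold kloosterman
    rw [Finset.sum_filter]
    refine Finset.sum_congr rfl fun z _ => ?_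
    have hn : z.norm = z.re ^ 2 - d * z.im ^ 2 := by
      rw [QuadraticAlgebra.norm_def]; ring
    change _ = g (2 * z.re) (z.re ^ 2 - d * z.im ^ 2)
    rw [← hn]
    simp only [g, QuadraticAlgebra.norm_eq_zero_iff_eq_zero, ite_not]
    split_ifs with hz
    · rfl
    · rw [trLift_apply, map_add, ← Algebra.smul_def, ← Algebra.smul_def, map_smul, map_smul,
        trace_quadraticAlgebra, trace_quadraticAlgebra]
      congr 1
      simp only [QuadraticAlgebra.re_inv, smul_eq_mul]
      ring
  have hK : kloosterman L ψ a b ^ 2 = ∑ u : L, ∑ v : L, g (2 * u) (u ^ 2 - v ^ 2) := by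
    have e1 : kloosterman L ψ a b ^ 2 = ∑ p : L × L, g (p.1 + p.2) (p.1 * p.2) := by
      rw [sq, kloosterman, Finset.sum_filter, Finset.sum_mul_sum, Fintype.sum_prod_type]
      refine Finset.sum_congr rfl fun x _ => Finset.sum_congr rfl fun y _ => ?_
      simp only [g]
      by_cases hx : x = 0
      · simp [hx]
      by_cases hy : y = 0
      · simp [hy]
      simp only [hx, hy, mul_eq_zero, ne_eq, not_false_eq_true, if_true, or_self, if_false]
      rw [← AddChar.map_add_eq_mul]
      congr 1
      field_simp
      ring
    rw [e1, ← Fintype.sum_prod_type']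
    let E : L × L ≃ L × L :=
      { toFun := fun p => (p.1 + p.2, p.1 - p.2)
        invFun := fun p => ((p.1 + p.2) / 2, (p.1 - p.2) / 2)
        left_inv := fun p => by ext <;> simp <;> field_simp <;> ring
        right_inv := fun p => by ext <;> simp <;> field_simp <;> ring }
    rw [← E.sum_comp]
    refine Finset.sum_congr rfl fun p _ => ?_
    simp only [E, Equiv.coe_fn_mk]
    congr 1 <;> ring
  have hS : kloosterman (QuadraticAlgebra L d 0) (ψ.trLift _) (algebraMap L _ a)
      (algebraMap L _ b) + kloosterman L ψ a b ^ 2 = 2 * Fintype.card L := by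
    rw [hM, hK, ← Finset.sum_add_distrib]
    have e2 : ∀ u : L, ∑ v : L, g (2 * u) (u ^ 2 - d * v ^ 2) + ∑ v : L, g (2 * u) (u ^ 2 - v ^ 2)
        = 2 * ∑ t : L, g (2 * u) t := by
      intro u
      rw [add_comm, sum_sq_add_sum_nonsquare_mul_sq h2 hd (fun D => g (2 * u) (u ^ 2 - D))]
      congr 1
      exact (Equiv.subLeft (u ^ 2)).sum_comp (fun t => g (2 * u) t)
    rw [Finset.sum_congr rfl (fun u _ => e2 u), ← Finset.mul_sum]
    have e3 := Equiv.sum_comp (Equiv.mulLeft₀ (2 : L) h20) (fun s => ∑ t : L, g s t)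
    simp only [Equiv.mulLeft₀_apply] at e3
    rw [e3, sum_add_div ψ hψ a b ha hb]
  linear_combination hS

/-- If the normalised Kloosterman sum is at least `2 + δ`, iterating `τ ↦ τ² - 2` makes it at least
`2 + 4 ^ j δ` over an extension of degree `2 ^ j`. -/
lemma kloosterman_tower (F : Type) [Field F] [Fintype F] (hodd : Odd (Fintype.card F))
    (ψ : AddChar F ℂ) (hψ : ψ ≠ 1) (a b : F) (ha : a ≠ 0) (hb : b ≠ 0) (δ : ℝ) (hδ : 0 ≤ δ)
    (h : (2 + δ) * √(Fintype.card F) ≤ ‖kloosterman F ψ a b‖) (j : ℕ) :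
    ∃ (L : Type) (_ : Field L) (_ : Fintype L) (_ : Algebra F L),
      Module.finrank F L = 2 ^ j ∧ (2 + 4 ^ j * δ) * √(Fintype.card F) ^ (2 ^ j) ≤
      ‖kloosterman L (ψ.trLift L) (algebraMap F L a) (algebraMap F L b)‖ := by
  induction j with
  | zero =>
    refine ⟨F, inferInstance, inferInstance, inferInstance, by simp, ?_⟩
    have : ψ.trLift F = ψ := by ext x; simp [trLift_apply]
    simpa [this] using h
  | succ j ih =>
    obtain ⟨L, _, _, _, hL, hK⟩ := ih
    have hcard : Fintype.card L = Fintype.card F ^ 2 ^ j := by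
      rw [Module.card_eq_pow_finrank (K := F) (V := L), hL]
    have h2 : ringChar L ≠ 2 := by
      intro h
      have := (FiniteField.even_card_iff_char_two).1 h
      rw [← Nat.even_iff, hcard] at this
      exact (Nat.not_even_iff_odd.2 hodd.pow) this
    obtain ⟨d, hd⟩ := FiniteField.exists_nonsquare h2
    have : Fact (∀ r : L, r ^ 2 ≠ d + 0 * r) :=
      ⟨fun r hr => hd ⟨r, by rw [← sq, hr]; ring⟩⟩
    let _ : Fintype (QuadraticAlgebra L d 0) := Fintype.ofEquiv _ (QuadraticAlgebra.equivProd d 0).symm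
    refine ⟨QuadraticAlgebra L d 0, inferInstance, inferInstance, inferInstance, ?_, ?_⟩
    · rw [← Module.finrank_mul_finrank F L, hL, QuadraticAlgebra.finrank_eq_two, pow_succ]
    · have key := kloosterman_quadratic h2 hd (ψ.trLift L) (trLift_ne_one hψ)
        (algebraMap F L a) (algebraMap F L b) (by simpa using ha) (by simpa using hb)
      have e1 : (ψ.trLift L).trLift (QuadraticAlgebra L d 0) = ψ.trLift _ := by
        ext x
        rw [trLift_apply, trLift_apply, trLift_apply, Algebra.trace_trace]
      rw [e1, ← IsScalarTower.algebraMap_apply, ← IsScalarTower.algebraMap_apply] at key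
      rw [key]
      set k := kloosterman L (ψ.trLift L) (algebraMap F L a) (algebraMap F L b)
      have hQ : (Fintype.card L : ℝ) = (√(Fintype.card F) ^ 2 ^ j) ^ 2 := by
        rw [hcard, ← pow_mul, mul_comm, pow_mul, Real.sq_sqrt (by positivity)]; simp
      have e2 : ‖k‖ ^ 2 - 2 * Fintype.card L ≤ ‖2 * (Fintype.card L : ℂ) - k ^ 2‖ := by
        have := norm_sub_norm_le (k ^ 2) (2 * (Fintype.card L : ℂ))
        rw [norm_sub_rev, norm_pow, norm_mul] at this
        simpa using this
      refine le_trans ?_ e2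
      rw [hQ, pow_succ 2 j, pow_mul]
      set r := √(Fintype.card F) ^ 2 ^ j
      have hr : 0 ≤ r := by positivity
      have h4 : (0 : ℝ) ≤ 4 ^ j * δ := by positivity
      have := pow_le_pow_left₀ (by positivity) hK 2
      rw [pow_succ 4 j]
      nlinarith [mul_nonneg (sq_nonneg r) (sq_nonneg (4 ^ j * δ))]

/-- Weil's bound for Kloosterman sums in odd characteristic. -/
theorem norm_kloosterman_le (F : Type) [Field F] [Fintype F] (hodd : Odd (Fintype.card F))
    (ψ : AddChar F ℂ) (hψ : ψ ≠ 1) (a b : F) (ha : a ≠ 0) (hb : b ≠ 0) :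
    ‖kloosterman F ψ a b‖ ≤ 2 * √(Fintype.card F) := by
  by_contra! hlt
  have hq : 3 ≤ Fintype.card F := by
    have := Fintype.one_lt_card (α := F)
    obtain ⟨k, hk⟩ := hodd
    omega
  have hs : 0 < √(Fintype.card F : ℝ) := Real.sqrt_pos.2 (by positivity)
  set δ := ‖kloosterman F ψ a b‖ / √(Fintype.card F) - 2 with hδ
  have hδ0 : 0 < δ := by rw [hδ, sub_pos, lt_div_iff₀ hs]; exact hlt
  have hδ1 : (2 + δ) * √(Fintype.card F) = ‖kloosterman F ψ a b‖ := by
    rw [hδ]; field_simp; ring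
  have hbd : ∀ j : ℕ, 2 + 4 ^ (j + 2) * δ ≤ 3 * Fintype.card F + 1 := by
    intro j
    obtain ⟨L, _, _, _, hL, hK⟩ :=
      kloosterman_tower F hodd ψ hψ a b ha hb δ hδ0.le hδ1.le (j + 2)
    have e1 : 2 ^ (j + 2) = 2 * 2 ^ (j + 1) := by ring
    have hub := norm_kloosterman_trLift_le F L hq (2 ^ (j + 1))
      (by rw [pow_succ]; have := Nat.one_le_two_pow (n := j); omega) (hL.trans e1) ψ hψ a b ha
    have := hK.trans hub
    rw [e1, pow_mul, Real.sq_sqrt (by positivity)] at this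
    exact le_of_mul_le_mul_right this (by positivity)
  obtain ⟨j, hj⟩ := pow_unbounded_of_one_lt ((3 * Fintype.card F + 1) / δ) (by norm_num : (1 : ℝ) < 4)
  have h1 := hbd j
  rw [div_lt_iff₀ hδ0] at hj
  have : (4 : ℝ) ^ j * δ ≤ 4 ^ (j + 2) * δ :=
    mul_le_mul_of_nonneg_right (pow_le_pow_right₀ (by norm_num) (by omega)) hδ0.le
  linarith

/-! ### Fourier analysis on the plane -/

/-- Weil's bound with `b = 0` allowed, in which case the sum is `-1`. -/
lemma norm_kloosterman_le' (F : Type) [Field F] [Fintype F] (hodd : Odd (Fintype.card F))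
    (ψ : AddChar F ℂ) (hψ : ψ ≠ 1) (a b : F) (ha : a ≠ 0) :
    ‖kloosterman F ψ a b‖ ≤ 2 * √(Fintype.card F) := by
  classical
  by_cases hb : b = 0
  · have h1 : kloosterman F ψ a b = -1 := by
      have h0 := AddChar.sum_mulShift a (AddChar.IsPrimitive.of_ne_one hψ)
      rw [if_neg ha, ← Finset.add_sum_erase _ _ (Finset.mem_univ (0 : F))] at h0
      have e1 : kloosterman F ψ a b = ∑ x ∈ Finset.univ.erase (0 : F), ψ (x * a) := by
        unfold kloosterman
        refine Finset.sum_congr (by ext; simp) fun x _ => by rw [hb]; congr 1; ring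
      rw [e1]
      rw [zero_mul, AddChar.map_zero_eq_one, Nat.cast_zero] at h0
      linear_combination h0
    have : (1 : ℝ) ≤ √(Fintype.card F) :=
      Real.one_le_sqrt.2 (by exact_mod_cast Fintype.card_pos)
    rw [h1, norm_neg, norm_one]; linarith
  · exact norm_kloosterman_le F hodd ψ hψ a b ha hb

/-- The square of a quadratic Gauss sum does not depend on `t`. -/
lemma sq_sum_quadratic (F : Type) [Field F] [Fintype F] [DecidableEq F] (h2 : ringChar F ≠ 2)
    (ψ : AddChar F ℂ) (hψ : ψ ≠ 1) (t : F) (ht : t ≠ 0) :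
    (∑ u : F, ψ (t * u ^ 2)) ^ 2 = (quadraticChar F (-1) : ℂ) * Fintype.card F := by
  set η : MulChar F ℂ := (quadraticChar F).ringHomComp (Int.castRingHom ℂ) with hη
  have hη1 : η ≠ 1 := by
    obtain ⟨x, hx⟩ := quadraticChar_exists_neg_one' h2
    intro h
    have : η x = 1 := by rw [h, MulChar.one_apply_coe]
    simp [hη, hx] at this
    norm_num at this
  have hp := AddChar.IsPrimitive.of_ne_one hψ
  have hpt : AddChar.mulShift ψ t ≠ 1 := hp ht
  have hsq := gaussSum_sq hη1 ((quadraticChar_isQuadratic F).comp _)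
    (AddChar.IsPrimitive.of_ne_one hpt)
  have hG : ∑ u : F, ψ (t * u ^ 2) = gaussSum η (AddChar.mulShift ψ t) := by
    rw [← Finset.sum_fiberwise Finset.univ (fun u : F => u ^ 2)]
    have e1 : ∀ D : F, ∑ u ∈ Finset.univ.filter (fun u : F => u ^ 2 = D), ψ (t * u ^ 2) =
        (η D + 1) * AddChar.mulShift ψ t D := by
      intro D
      have c1 := quadraticChar_card_sqrts h2 D
      have s1 : {x : F | x ^ 2 = D}.toFinset = Finset.univ.filter (fun v => v ^ 2 = D) := by
        ext; simp
      rw [s1] at c1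
      have c2 : ((Finset.univ.filter (fun v => v ^ 2 = D)).card : ℂ) = η D + 1 := by
        rw [hη]; simp only [MulChar.ringHomComp_apply, eq_intCast]; exact_mod_cast c1
      rw [Finset.sum_congr rfl (g := fun _ => ψ (t * D))
        (fun x hx => by rw [(Finset.mem_filter.1 hx).2]), Finset.sum_const, nsmul_eq_mul, c2,
        AddChar.mulShift_apply]
    rw [Finset.sum_congr rfl (fun D _ => e1 D), gaussSum]
    simp only [add_mul, one_mul, Finset.sum_add_distrib,
      AddChar.sum_eq_zero_of_ne_one hpt, add_zero]
  rw [hG, hsq]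
  simp [hη]

lemma sum_char_pi {F : Type} [Field F] [Fintype F] [DecidableEq F]
    (ψ : AddChar F ℂ) (hψ : ψ ≠ 1) (x : Fin 2 → F) :
    ∑ ξ : Fin 2 → F, ψ (∑ i, ξ i * x i) = if x = 0 then (Fintype.card F : ℂ) ^ 2 else 0 := by
  rw [← (finTwoArrowEquiv F).symm.sum_comp, Fintype.sum_prod_type]
  have hp := AddChar.IsPrimitive.of_ne_one hψ
  simp only [finTwoArrowEquiv_symm_apply, Fin.sum_univ_two, AddChar.map_add_eq_mul,
    Matrix.cons_val_zero, Matrix.cons_val_one]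
  simp only [← Finset.mul_sum, ← Finset.sum_mul, AddChar.sum_mulShift _ hp]
  by_cases h0 : x 0 = 0 <;> by_cases h1 : x 1 = 0 <;>
    simp [h0, h1, funext_iff, Fin.forall_fin_two, sq]

open Classical in
/-- The Fourier transform of the circle of radius `a ≠ 0` is at most `2 √q` away from `0`. -/
lemma circle_fourier {F : Type} [Field F] [Fintype F] (hodd : Odd (Fintype.card F))
    (ψ : AddChar F ℂ) (hψ : ψ ≠ 1) (a : F) (ha : a ≠ 0) (ξ : Fin 2 → F) (hξ : ξ ≠ 0) :
    ‖∑ y : Fin 2 → F, (if ∑ i, y i ^ 2 = a then ψ (∑ i, y i * ξ i) else 0)‖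
      ≤ 2 * √(Fintype.card F) := by
  have h2 : ringChar F ≠ 2 := by
    intro h
    have := (FiniteField.even_card_iff_char_two).1 h
    rw [← Nat.even_iff] at this
    exact (Nat.not_even_iff_odd.2 hodd) this
  have h20 : (2 : F) ≠ 0 := Ring.two_ne_zero h2
  have hp := AddChar.IsPrimitive.of_ne_one hψ
  have hq0 : (Fintype.card F : ℂ) ≠ 0 := by exact_mod_cast Fintype.card_ne_zero
  set S := ∑ y : Fin 2 → F, (if ∑ i, y i ^ 2 = a then ψ (∑ i, y i * ξ i) else 0) with hS
  -- averaging `I t` over `t` detects the condition `∑ i, y i ^ 2 = a`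
  let I : F → ℂ := fun t => ∑ y : Fin 2 → F, ψ (t * (∑ i, y i ^ 2 - a) + ∑ i, y i * ξ i)
  have hI : ∑ t, I t = Fintype.card F * S := by
    simp only [I]
    rw [Finset.sum_comm, hS, Finset.mul_sum]
    refine Finset.sum_congr rfl fun y _ => ?_
    simp only [AddChar.map_add_eq_mul, ← Finset.sum_mul, AddChar.sum_mulShift _ hp, sub_eq_zero]
    split_ifs <;> simp
  have hI0 : I 0 = 0 := by
    simp only [I, zero_mul, zero_add]
    rw [sum_char_pi ψ hψ, if_neg hξ]
  have hIt : ∀ t : F, t ≠ 0 → I t = (quadraticChar F (-1) : ℂ) * Fintype.card F *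
      ψ ((-a) * t + (-(∑ i, ξ i ^ 2) / 4) * t⁻¹) := by
    intro t ht
    have h40 : (4 : F) ≠ 0 := by
      have : (4 : F) = 2 * 2 := by norm_num
      rw [this]; exact mul_ne_zero h20 h20
    -- completing the square in one variable
    have hone : ∀ c : F, ∑ u : F, ψ (t * u ^ 2 + u * c) =
        ψ (- c ^ 2 / 4 * t⁻¹) * ∑ u : F, ψ (t * u ^ 2) := by
      intro c
      rw [← Equiv.sum_comp (Equiv.addRight (c / (2 * t))) (fun u => ψ (t * u ^ 2)), Finset.mul_sum]
      refine Finset.sum_congr rfl fun u _ => ?_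
      rw [← AddChar.map_add_eq_mul]
      congr 1
      simp only [Equiv.coe_addRight]
      field_simp
      ring
    rw [← sq_sum_quadratic F h2 ψ hψ t ht]
    simp only [I]
    rw [← (finTwoArrowEquiv F).symm.sum_comp, Fintype.sum_prod_type]
    simp only [finTwoArrowEquiv_symm_apply, Fin.sum_univ_two,
      Matrix.cons_val_zero, Matrix.cons_val_one]
    have e1 : ∀ u v : F, ψ (t * (u ^ 2 + v ^ 2 - a) + (u * ξ 0 + v * ξ 1)) =
        ψ (-a * t) * (ψ (t * u ^ 2 + u * ξ 0) * ψ (t * v ^ 2 + v * ξ 1)) := by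
      intro u v
      rw [← AddChar.map_add_eq_mul, ← AddChar.map_add_eq_mul]
      congr 1; ring
    simp only [e1, ← Finset.mul_sum, ← Finset.sum_mul, hone]
    have e2 : (-a) * t + (-(ξ 0 ^ 2 + ξ 1 ^ 2) / 4) * t⁻¹ =
      (-a * t) + (- ξ 0 ^ 2 / 4 * t⁻¹ + - ξ 1 ^ 2 / 4 * t⁻¹) := by ring
    rw [e2, AddChar.map_add_eq_mul, AddChar.map_add_eq_mul]
    ring
  have hfin : S = (quadraticChar F (-1) : ℂ) *
      kloosterman F ψ (-a) (-(∑ i, ξ i ^ 2) / 4) := by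
    have e1 : ∑ t, I t = (quadraticChar F (-1) : ℂ) * Fintype.card F *
        kloosterman F ψ (-a) (-(∑ i, ξ i ^ 2) / 4) := by
      rw [kloosterman, Finset.mul_sum, Finset.sum_filter]
      refine Finset.sum_congr rfl fun t _ => ?_
      by_cases ht : t = 0
      · simp [ht, hI0]
      · rw [if_pos ht, hIt t ht]
    apply mul_left_cancel₀ hq0
    rw [← hI, e1]; ring
  rw [hfin, norm_mul]
  have hη : ‖(quadraticChar F (-1) : ℂ)‖ = 1 := by
    rcases quadraticChar_dichotomy (F := F) (a := -1) (by simp) with h | h <;> simp [h]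
  rw [hη, one_mul]
  exact norm_kloosterman_le' F hodd ψ hψ _ _ (neg_ne_zero.2 ha)

/-- Plancherel's identity on `F²`, for real-valued functions. -/
lemma plancherel {F : Type} [Field F] [Fintype F] [DecidableEq F]
    (ψ : AddChar F ℂ) (hψ : ψ ≠ 1) (f : (Fin 2 → F) → ℝ) :
    ∑ ξ : Fin 2 → F, ‖∑ x : Fin 2 → F, (f x : ℂ) * ψ (∑ i, x i * ξ i)‖ ^ 2 =
      (Fintype.card F : ℝ) ^ 2 * ∑ x, f x ^ 2 := by
  have key : ∑ ξ : Fin 2 → F, ((‖∑ x : Fin 2 → F, (f x : ℂ) * ψ (∑ i, x i * ξ i)‖ ^ 2 : ℝ) : ℂ) =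
      (Fintype.card F : ℂ) ^ 2 * ∑ x, (f x : ℂ) ^ 2 := by
    have e1 : ∀ ξ : Fin 2 → F,
        ((‖∑ x : Fin 2 → F, (f x : ℂ) * ψ (∑ i, x i * ξ i)‖ ^ 2 : ℝ) : ℂ) =
        ∑ x : Fin 2 → F, ∑ y : Fin 2 → F, (f x : ℂ) * f y * ψ (∑ i, ξ i * (x - y) i) := by
      intro ξ
      rw [Complex.ofReal_pow, ← Complex.mul_conj', map_sum, Finset.sum_mul_sum]
      refine Finset.sum_congr rfl fun x _ => Finset.sum_congr rfl fun y _ => ?_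
      rw [map_mul, Complex.conj_ofReal, ← AddChar.map_neg_eq_conj]
      have : ∑ i, ξ i * (x - y) i = ∑ i, x i * ξ i + -∑ i, y i * ξ i := by
        simp [Fin.sum_univ_two]; ring
      rw [this, AddChar.map_add_eq_mul]; ring
    rw [Finset.sum_congr rfl (fun ξ _ => e1 ξ), Finset.sum_comm, Finset.mul_sum]
    refine Finset.sum_congr rfl fun x _ => ?_
    rw [Finset.sum_comm]
    simp only [← Finset.mul_sum, sum_char_pi ψ hψ, sub_eq_zero]
    simp
    ring
  exact_mod_cast key

/-- Second moment bound: `∑_x (|E ∩ S_a(x)| − |E||S_a|q⁻²)² ≤ 4q|E|`. -/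
theorem stmt_8 (F : Type) [Field F] [Fintype F] [DecidableEq F]
    (hodd : Odd (Fintype.card F))
    (E : Finset (Fin 2 → F)) (a : F) (ha : a ≠ 0) :
    ∑ x : Fin 2 → F,
      (((E.filter (fun y => (∑ i, (x i - y i) ^ 2) = a)).card : ℝ)
        - (E.card : ℝ) *
            ((Finset.univ.filter (fun y : Fin 2 → F => (∑ i, y i ^ 2) = a)).card : ℝ)
            / (Fintype.card F : ℝ) ^ 2) ^ 2
      ≤ 4 * (Fintype.card F : ℝ) * (E.card : ℝ) := by
  obtain ⟨ψ, hψ⟩ : ∃ ψ : AddChar F ℂ, ψ ≠ 1 := by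
    obtain ⟨ψ, hψ⟩ := AddChar.exists_apply_ne_zero.2 (one_ne_zero (α := F))
    exact ⟨ψ, by rintro rfl; simp at hψ⟩
  have hq : (0 : ℝ) < Fintype.card F := by exact_mod_cast Fintype.card_pos
  have hq0 : (Fintype.card F : ℂ) ≠ 0 := by exact_mod_cast Fintype.card_ne_zero
  set s : ℝ := ((Finset.univ.filter (fun y : Fin 2 → F => (∑ i, y i ^ 2) = a)).card : ℝ) with hs
  let f : (Fin 2 → F) → ℝ := fun x => ((E.filter (fun y => (∑ i, (x i - y i) ^ 2) = a)).card : ℝ)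
        - (E.card : ℝ) * s / (Fintype.card F : ℝ) ^ 2
  let g : (Fin 2 → F) → ℝ := fun x => if x ∈ E then 1 else 0
  have hg : ∀ y, (g y : ℂ) = if y ∈ E then 1 else 0 := by
    intro y; simp only [g]; split_ifs <;> simp
  let Eh : (Fin 2 → F) → ℂ := fun ξ => ∑ x : Fin 2 → F, (g x : ℂ) * ψ (∑ i, x i * ξ i)
  let Sh : (Fin 2 → F) → ℂ := fun ξ =>
    ∑ y : Fin 2 → F, (if ∑ i, y i ^ 2 = a then ψ (∑ i, y i * ξ i) else 0)
  -- the transform of `f` is `Ê Ŝ` with its value at `0` removed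
  have hf : ∀ ξ : Fin 2 → F, ∑ x : Fin 2 → F, (f x : ℂ) * ψ (∑ i, x i * ξ i) =
      Eh ξ * Sh ξ - if ξ = 0 then (E.card : ℂ) * s else 0 := by
    intro ξ
    have e0 : ∀ x : Fin 2 → F, ((E.filter (fun y => (∑ i, (x i - y i) ^ 2) = a)).card : ℂ) =
        ∑ y : Fin 2 → F, (g y : ℂ) * (if ∑ i, (x i - y i) ^ 2 = a then 1 else 0) := by
      intro x
      rw [Finset.card_filter]
      push_cast
      simp only [hg, ite_mul, one_mul, zero_mul]
      rw [Finset.sum_ite_mem, Finset.univ_inter]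
    have e1 : ∑ x : Fin 2 → F, ((E.filter (fun y => (∑ i, (x i - y i) ^ 2) = a)).card : ℂ) *
        ψ (∑ i, x i * ξ i) = Eh ξ * Sh ξ := by
      simp only [e0, Finset.sum_mul, Eh]
      rw [Finset.sum_comm]
      refine Finset.sum_congr rfl fun y _ => ?_
      rw [← Equiv.sum_comp (Equiv.addRight y)]
      simp only [Sh, Finset.mul_sum]
      refine Finset.sum_congr rfl fun x _ => ?_
      simp only [Equiv.coe_addRight, Pi.add_apply, add_sub_cancel_right, add_mul,
        Finset.sum_add_distrib, AddChar.map_add_eq_mul]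
      split_ifs <;> ring
    have e2 : ∑ x : Fin 2 → F, ψ (∑ i, x i * ξ i) =
      if ξ = 0 then (Fintype.card F : ℂ) ^ 2 else 0 := sum_char_pi ψ hψ ξ
    simp only [f]
    push_cast
    simp only [sub_mul, Finset.sum_sub_distrib, e1, ← Finset.mul_sum, e2]
    split_ifs
    · field_simp
    · simp
  have hbound : ∀ ξ : Fin 2 → F, ‖∑ x : Fin 2 → F, (f x : ℂ) * ψ (∑ i, x i * ξ i)‖ ^ 2 ≤
      4 * Fintype.card F * ‖Eh ξ‖ ^ 2 := by
    intro ξ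
    rw [hf]
    by_cases hξ : ξ = 0
    · have : Eh ξ * Sh ξ - (if ξ = 0 then (E.card : ℂ) * s else 0) = 0 := by
        simp [hξ, Eh, Sh, hg, hs]
      rw [this]; simp; positivity
    · have h1 : ‖Sh ξ‖ ≤ 2 * √(Fintype.card F) := by
        have := circle_fourier hodd ψ hψ a ha ξ hξ
        convert this
      have h2 := pow_le_pow_left₀ (norm_nonneg _) h1 2
      rw [mul_pow, Real.sq_sqrt hq.le] at h2
      rw [if_neg hξ, sub_zero, norm_mul, mul_pow]
      nlinarith [sq_nonneg ‖Eh ξ‖]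
  have h1 := plancherel ψ hψ f
  have h2 : ∑ ξ : Fin 2 → F, ‖Eh ξ‖ ^ 2 = _ := plancherel ψ hψ g
  have h3 : ∑ x, g x ^ 2 = E.card := by simp [g]
  have h4 := Finset.sum_le_sum fun ξ (_ : ξ ∈ Finset.univ) => hbound ξ
  rw [h1, ← Finset.mul_sum, h2, h3] at h4
  refine le_of_mul_le_mul_left (h4.trans (le_of_eq ?_)) (show 0 < (Fintype.card F : ℝ) ^ 2 by positivity)
  ring
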